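/- arXiv:math/0011150 — 2 statements merged into one kernel-verified Lean document; each statement's English description precedes it below -/
import Mathlib

section
/- Lemma 3.1: let α > 0, let p_1, …, p_n ∈ (0,1), set r_j = p_j/(1−p_j) and ū = max_j(−1/r_j) < 0, and assume (α/n)·Σ_{j=1}^n r_j < 1. Then the equation (α/n)·Σ_{j=1}^n r_j/(1+r_j u)² = 1/(u−1)² has a unique solution u in the interval (ū, 0), and the number c defined by c = 1/(1−u) − (α/n)·Σ_{j=1}^n r_j u/(1+r_j u) satisfies 0 < c < 1. -/
open MeasureTheory ProbabilityTheory Filter Set Topology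

/-!
With `a_j = (α/n) r_j`, multiplying the equation by `(1 - u)²` turns it into
`∑ a_j ((1 - u)/(1 + r_j u))² = 1`, whose left-hand side is continuous and strictly decreasing on
`(ū, 0]`, is `∑ a_j < 1` at `0`, and exceeds `1` near the pole `ū`. For the solution `u`, put
`S = ∑ a_j/(1 + r_j u)`. Then `c = 1/(1 - u) - u S` lies in `(0, 1)` as soon as
`0 < S < 1/(1 - u)`, and the upper bound is Cauchy-Schwarz:
`S² ≤ (∑ a_j) ∑ a_j/(1 + r_j u)² < 1/(1 - u)²`.
-/

lemma one_add_mul_pos_of_neg_one_div_lt {r u : ℝ} (hr : 0 < r) (hu : -1 / r < u) :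
    0 < 1 + r * u := by
  rw [div_lt_iff₀ hr] at hu
  linarith

lemma one_add_mul_pos_of_mem_upperBounds {ι : Type*} {r : ι → ℝ} {u ub : ℝ}
    (hr : ∀ j, 0 < r j) (hub : ub ∈ upperBounds (range fun j => -1 / r j))
    (hu : ub < u) (j : ι) : 0 < 1 + r j * u :=
  one_add_mul_pos_of_neg_one_div_lt (hr j) ((hub (mem_range_self j)).trans_lt hu)

lemma strictAntiOn_one_sub_div_one_add_mul {r : ℝ} (hr : -1 < r) :
    StrictAntiOn (fun u : ℝ => (1 - u) / (1 + r * u)) {u | 0 < 1 + r * u} := by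
  intro x hx y hy hxy
  have hpos : 0 < (1 + r) * (y - x) := mul_pos (by linarith) (sub_pos.2 hxy)
  refine (div_lt_div_iff₀ hy hx).2 ?_
  linarith

lemma one_div_one_sub_sub_mul_mem_Ioo {u s : ℝ} (hu : u < 0) (hs : s ∈ Ioo 0 (1 / (1 - u))) :
    1 / (1 - u) - u * s ∈ Ioo (0 : ℝ) 1 := by
  have h_one_sub : 0 < 1 - u := by linarith
  constructor
  · have : 0 < 1 / (1 - u) := one_div_pos.2 h_one_sub
    have : u * s < 0 := mul_neg_of_neg_of_pos hu hs.1
    linarith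
  · calc 1 / (1 - u) - u * s < 1 / (1 - u) - u * (1 / (1 - u)) :=
          sub_lt_sub_left (mul_lt_mul_of_neg_left hs.2 hu) _
      _ = 1 := by field_simp

section Sums

variable {ι : Type*} [Fintype ι] {a r : ι → ℝ} {u ub : ℝ}

lemma sum_mul_lt_of_sum_mul_sq_eq_sq {x : ι → ℝ} {y : ℝ} (ha : ∀ j, 0 ≤ a j)
    (hsum : ∑ j, a j < 1) (hy : 0 < y) (hx : ∑ j, a j * x j ^ 2 = y ^ 2) :
    ∑ j, a j * x j < y := by
  refine lt_of_pow_lt_pow_left₀ 2 hy.le ?_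
  calc (∑ j, a j * x j) ^ 2 ≤ (∑ j, a j) * ∑ j, a j * x j ^ 2 :=
        Finset.sum_sq_le_sum_mul_sum_of_sq_le_mul _ (fun j _ => ha j)
          (fun j _ => mul_nonneg (ha j) (sq_nonneg _)) (fun j _ => le_of_eq (by ring))
    _ = (∑ j, a j) * y ^ 2 := by rw [hx]
    _ < 1 * y ^ 2 := mul_lt_mul_of_pos_right hsum (pow_pos hy 2)
    _ = y ^ 2 := one_mul _

/-- The left-hand side of the equation `∑ j, a j / (1 + r j * u) ^ 2 = 1 / (u - 1) ^ 2` after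
multiplication by `(1 - u) ^ 2`, which turns the right-hand side into the constant `1`. -/
noncomputable def rescaledSum (a r : ι → ℝ) (u : ℝ) : ℝ :=
  ∑ j, a j * ((1 - u) / (1 + r j * u)) ^ 2

lemma rescaledSum_zero : rescaledSum a r 0 = ∑ j, a j := by
  simp [rescaledSum]

lemma sum_div_sq_eq_iff_rescaledSum_eq_one (hu : u ≠ 1) :
    ∑ j, a j / (1 + r j * u) ^ 2 = 1 / (u - 1) ^ 2 ↔ rescaledSum a r u = 1 := by
  have h_sum : (∑ j, a j / (1 + r j * u) ^ 2) * (u - 1) ^ 2 = rescaledSum a r u := by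
    rw [rescaledSum, Finset.sum_mul]
    exact Finset.sum_congr rfl fun j _ => by rw [div_pow]; ring
  rw [eq_div_iff (pow_ne_zero 2 (sub_ne_zero.2 hu)), h_sum]

lemma continuousOn_rescaledSum :
    ContinuousOn (rescaledSum a r) {u | ∀ j, 1 + r j * u ≠ 0} := by
  refine continuousOn_finsetSum _ fun j _ => continuousOn_const.mul (ContinuousOn.pow ?_ 2)
  exact ContinuousOn.div (by fun_prop) (by fun_prop) fun u hu => hu j

lemma strictAntiOn_rescaledSum [Nonempty ι] (ha : ∀ j, 0 < a j) (hr : ∀ j, -1 < r j) :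
    StrictAntiOn (rescaledSum a r) {u | u ≤ 1 ∧ ∀ j, 0 < 1 + r j * u} := by
  rintro x ⟨-, hx⟩ y ⟨hy_le, hy⟩ hxy
  refine Finset.sum_lt_sum_of_nonempty Finset.univ_nonempty fun j _ => ?_
  have h_base : (1 - y) / (1 + r j * y) < (1 - x) / (1 + r j * x) :=
    strictAntiOn_one_sub_div_one_add_mul (hr j) (hx j) (hy j) hxy
  have h_nonneg : 0 ≤ (1 - y) / (1 + r j * y) := div_nonneg (sub_nonneg.2 hy_le) (hy j).le
  exact mul_lt_mul_of_pos_left (pow_lt_pow_left₀ h_base h_nonneg two_ne_zero) (ha j)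

lemma exists_one_lt_rescaledSum (ha : ∀ j, 0 ≤ a j) {i : ι} (hai : a i ∈ Ioo (0 : ℝ) 1)
    (hri : 0 < r i) : ∃ v ∈ Ioo (-1 / r i) 0, 1 < rescaledSum a r v := by
  -- With `1 + r i * v = a i`, the `i`-th term alone is `(1 - v) ^ 2 / a i > 1`.
  obtain ⟨v, hv⟩ : ∃ v, 1 + r i * v = a i := ⟨(a i - 1) / r i, by field_simp; ring⟩
  have hv_eq : v = (a i - 1) / r i := by rw [eq_div_iff hri.ne']; linarith
  have hv_neg : v < 0 := hv_eq ▸ div_neg_of_neg_of_pos (sub_neg.2 hai.2) hri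
  have hv_gt : -1 / r i < v :=
    hv_eq ▸ div_lt_div_of_pos_right (by linarith [hai.1]) hri
  refine ⟨v, ⟨hv_gt, hv_neg⟩, ?_⟩
  have h_sq : 1 < (1 - v) ^ 2 := one_lt_pow₀ (by linarith) two_ne_zero
  calc 1 < (1 - v) ^ 2 / a i := (one_lt_div hai.1).2 (hai.2.trans h_sq)
    _ = a i * ((1 - v) / (1 + r i * v)) ^ 2 := by
        have := hai.1.ne'
        rw [hv]
        field_simp
    _ ≤ rescaledSum a r v :=
        Finset.single_le_sum (f := fun j => a j * ((1 - v) / (1 + r j * v)) ^ 2)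
          (fun j _ => mul_nonneg (ha j) (sq_nonneg _)) (Finset.mem_univ i)

theorem existsUnique_rescaledSum_eq_one (ha : ∀ j, 0 < a j) (hr : ∀ j, 0 < r j)
    (hub : IsGreatest (range fun j => -1 / r j) ub) (hsum : ∑ j, a j < 1) :
    ∃! u, u ∈ Ioo ub 0 ∧ rescaledSum a r u = 1 := by
  obtain ⟨⟨i, rfl⟩, h_upper⟩ := hub
  have : Nonempty ι := ⟨i⟩
  have h_pos {u : ℝ} (hu : -1 / r i < u) (j : ι) : 0 < 1 + r j * u :=
    one_add_mul_pos_of_mem_upperBounds hr h_upper hu j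
  have hai : a i < 1 :=
    (Finset.single_le_sum (f := a) (fun j _ => (ha j).le) (Finset.mem_univ i)).trans_lt hsum
  obtain ⟨v, ⟨hv_gt, hv_neg⟩, hv_one_lt⟩ :=
    exists_one_lt_rescaledSum (fun j => (ha j).le) ⟨ha i, hai⟩ (hr i)
  have h_zero : rescaledSum a r 0 < 1 := rescaledSum_zero.trans_lt hsum
  have h_cont : ContinuousOn (rescaledSum a r) (Icc v 0) :=
    continuousOn_rescaledSum.mono fun x hx j => (h_pos (hv_gt.trans_le hx.1) j).ne'
  obtain ⟨u, ⟨hvu, hu_neg⟩, hu_eq⟩ :=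
    intermediate_value_Ioo' hv_neg.le h_cont ⟨h_zero, hv_one_lt⟩
  have h_anti : StrictAntiOn (rescaledSum a r) (Ioo (-1 / r i) 0) :=
    (strictAntiOn_rescaledSum ha fun j => by linarith [hr j]).mono
      fun x hx => ⟨hx.2.le.trans zero_le_one, h_pos hx.1⟩
  have hu : u ∈ Ioo (-1 / r i) 0 := ⟨hv_gt.trans hvu, hu_neg⟩
  exact ⟨u, ⟨hu, hu_eq⟩, fun y ⟨hy, hy_eq⟩ => h_anti.injOn hy hu (hy_eq.trans hu_eq.symm)⟩

theorem one_div_one_sub_sub_sum_mem_Ioo [Nonempty ι] (ha : ∀ j, 0 < a j) (hsum : ∑ j, a j < 1)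
    (hu : u < 0) (hpos : ∀ j, 0 < 1 + r j * u)
    (heq : ∑ j, a j / (1 + r j * u) ^ 2 = 1 / (u - 1) ^ 2) :
    1 / (1 - u) - ∑ j, a j * u / (1 + r j * u) ∈ Ioo (0 : ℝ) 1 := by
  have h_factor : ∑ j, a j * u / (1 + r j * u) = u * ∑ j, a j * (1 / (1 + r j * u)) := by
    rw [Finset.mul_sum]
    exact Finset.sum_congr rfl fun j _ => by ring
  have h_sq : ∑ j, a j * (1 / (1 + r j * u)) ^ 2 = (1 / (1 - u)) ^ 2 := by
    simpa only [one_div, inv_pow, ← div_eq_mul_inv, sub_sq_comm 1 u] using heq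
  rw [h_factor]
  refine one_div_one_sub_sub_mul_mem_Ioo hu ⟨?_, ?_⟩
  · exact Finset.sum_pos (fun j _ => mul_pos (ha j) (one_div_pos.2 (hpos j)))
      Finset.univ_nonempty
  · exact sum_mul_lt_of_sum_mul_sq_eq_sq (fun j => (ha j).le) hsum
      (one_div_pos.2 (by linarith)) h_sq

end Sums

theorem stmt_14_general {ι : Type*} [Fintype ι] {a r : ι → ℝ} {ub : ℝ}
    (ha : ∀ j, 0 < a j) (hr : ∀ j, 0 < r j) (hub : IsGreatest (range fun j => -1 / r j) ub)
    (hsum : ∑ j, a j < 1) :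
    (∃! u : ℝ, u ∈ Ioo ub 0 ∧ ∑ j, a j / (1 + r j * u) ^ 2 = 1 / (u - 1) ^ 2) ∧
      ∀ u ∈ Ioo ub 0, ∑ j, a j / (1 + r j * u) ^ 2 = 1 / (u - 1) ^ 2 →
        1 / (1 - u) - ∑ j, a j * u / (1 + r j * u) ∈ Ioo (0 : ℝ) 1 := by
  constructor
  · refine (existsUnique_congr fun u => and_congr_right fun hu => ?_).2
      (existsUnique_rescaledSum_eq_one ha hr hub hsum)
    exact sum_div_sq_eq_iff_rescaledSum_eq_one (hu.2.trans zero_lt_one).ne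
  · intro u hu heq
    have : Nonempty ι := range_nonempty_iff_nonempty.1 hub.nonempty
    have hpos : ∀ j, 0 < 1 + r j * u := one_add_mul_pos_of_mem_upperBounds hr hub.2 hu.1
    exact one_div_one_sub_sub_sum_mem_Ioo ha hsum hu.2 hpos heq

/-- Lemma 3.1: let `α > 0`, `p 0, …, p (n−1) ∈ (0,1)`,
`r j = p j/(1 − p j)`, and `ū = max_j (−1/r j) < 0`; assume `(α/n)·Σ r j < 1`.
Then `(α/n)·Σ r j/(1 + r j·u)² = 1/(u−1)²` has a unique solution `u ∈ (ū, 0)`, and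
for this solution the number `c = 1/(1−u) − (α/n)·Σ r j·u/(1 + r j·u)` satisfies
`0 < c < 1`. -/
theorem stmt_14
    (α : ℝ) (hα : 0 < α) (n : ℕ) (hn : 0 < n)
    (p : Fin n → ℝ) (hp : ∀ j, p j ∈ Set.Ioo (0:ℝ) 1)
    (r : Fin n → ℝ) (hr : ∀ j, r j = p j / (1 - p j))
    (ub : ℝ) (hub : IsGreatest (Set.range fun j => -1 / r j) ub)
    (hsum : (α / n) * ∑ j, r j < 1) :
    (∃! u : ℝ, u ∈ Set.Ioo ub 0 ∧
        (α / n) * ∑ j, r j / (1 + r j * u) ^ 2 = 1 / (u - 1) ^ 2) ∧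
      ∀ u ∈ Set.Ioo ub 0,
        (α / n) * ∑ j, r j / (1 + r j * u) ^ 2 = 1 / (u - 1) ^ 2 →
          (1 / (1 - u) - (α / n) * ∑ j, r j * u / (1 + r j * u)) ∈ Set.Ioo (0:ℝ) 1 := by
  have hr_pos (j : Fin n) : 0 < r j := hr j ▸ div_pos (hp j).1 (sub_pos.2 (hp j).2)
  have ha (j : Fin n) : 0 < α / n * r j := mul_pos (div_pos hα (Nat.cast_pos.2 hn)) (hr_pos j)
  simp only [Finset.mul_sum] at hsum ⊢
  simpa only [mul_assoc, mul_div_assoc] using stmt_14_general ha hr_pos hub hsum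
end

section
/- Lemma 3.2: let F be a distribution function on [0,1] with b = b(F) < 1, set ξ = 1 − 1/b < 0, and assume α'_c < α < α_c. Then, writing r = p/(1−p) for p with law F, the equation α·⟨r/(1+r u₀)²⟩ = 1/(u₀−1)² has a unique solution u₀ in the interval (ξ, 0), and the number c₀ defined by c₀ = 1/(1−u₀) − α·⟨r u₀/(1+r u₀)⟩ satisfies 0 < c₀ < 1. -/
open MeasureTheory ProbabilityTheory Filter Set Topology

/-!
Replace `F` by the measure `ν = αF`, and substitute `w = 1 / (1 - u)`, which maps `(ξ, 0)` onto
`(b, 1)`. The quantity `c` then becomes `w + (1 - w) ∫ x / (w - x) dν`, and the equation for `u₀`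
becomes `∫ x (1 - x) / (w - x)² dν = 1`, the critical point equation of this function of `w`.
Its left-hand side is continuous and strictly decreasing on `(b, 1]`, is less than `1` at `w = 1`
(this is `α < α_c`), and exceeds `1` near `b` (Fatou's lemma and `α > α'_c`). At the solution `w₀`,
`0 ≤ ∫ x / (w₀ - x) dν < ∫ x (1 - x) / (w₀ - x)² dν = 1` because `w₀ < 1`, so that
`w₀ ≤ c₀ < 1`.
-/

/-- The weighted resolvent `∫ x / (w - x) dν`. It gives the integral term of `c₀` after the
substitution `w = 1 / (1 - u)`. -/
noncomputable def resolventIntegral (ν : Measure ℝ) (w : ℝ) : ℝ :=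
  ∫ x, x / (w - x) ∂ν

/-- The integral `∫ x (1 - x) / (w - x)² dν`, whose value is `1` at the critical points of
`w ↦ w + (1 - w) * resolventIntegral ν w`. It gives the equation for `u₀` after the substitution
`w = 1 / (1 - u)`. -/
noncomputable def criticalIntegral (ν : Measure ℝ) (w : ℝ) : ℝ :=
  ∫ x, x * (1 - x) / (w - x) ^ 2 ∂ν

theorem integral_lt_integral_of_ae_le_of_frequently_lt {X : Type*} [MeasurableSpace X]
    {ν : Measure X} {f g : X → ℝ} (hf : Integrable f ν) (hg : Integrable g ν)
    (hle : f ≤ᵐ[ν] g) (hlt : ∃ᶠ x in ae ν, f x < g x) : ∫ x, f x ∂ν < ∫ x, g x ∂ν := by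
  refine (integral_mono_ae hf hg hle).lt_of_ne fun heq ↦ hlt ?_
  filter_upwards [(integral_eq_iff_of_ae_le hf hg hle).1 heq] with x hx using hx.not_lt

theorem integral_lt_integral_of_ae_lt_of_pos {ν : Measure ℝ} {f g : ℝ → ℝ}
    (hf : Integrable f ν) (hg : Integrable g ν) (hnonneg : ∀ᵐ x ∂ν, 0 ≤ x)
    (hpos : ∃ᶠ x in ae ν, 0 < x) (hzero : f 0 ≤ g 0) (hlt : ∀ᵐ x ∂ν, 0 < x → f x < g x) :
    ∫ x, f x ∂ν < ∫ x, g x ∂ν := by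
  refine integral_lt_integral_of_ae_le_of_frequently_lt hf hg ?_
    ((hpos.and_eventually hlt).mono fun x hx ↦ hx.2 hx.1)
  filter_upwards [hnonneg, hlt] with x hx hx_lt
  rcases hx.eq_or_lt with rfl | hx0
  · exact hzero
  · exact (hx_lt hx0).le

theorem ae_mem_Icc_sInf_measure_Iic_eq_one {μ : Measure ℝ} [IsProbabilityMeasure μ] {a c : ℝ}
    (h : μ (Icc a c) = 1) : ∀ᵐ x ∂μ, x ∈ Icc a (sInf {s | μ (Iic s) = 1}) := by
  have hmem : ∀ᵐ x ∂μ, x ∈ Icc a c := (prob_compl_eq_zero_iff measurableSet_Icc).2 h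
  have hset : {s | μ (Iic s) = 1} = {s | μ (Ioi s) = 0} := by
    simp only [← compl_Iic, prob_compl_eq_zero_iff measurableSet_Iic]
  have hess : ∀ᵐ x ∂μ, x ≤ essSup (fun x ↦ x) μ := ae_le_essSup ⟨c, hmem.mono fun _ hx ↦ hx.2⟩
  rw [essSup_eq_sInf] at hess
  rw [hset]
  filter_upwards [hmem, hess] with x hx hx_le using ⟨hx.1, hx_le⟩

section Kernels

variable {b w x : ℝ}

theorem critical_kernel_nonneg (hx : x ∈ Icc 0 1) : 0 ≤ x * (1 - x) / (w - x) ^ 2 :=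
  div_nonneg (mul_nonneg hx.1 (sub_nonneg.2 hx.2)) (sq_nonneg _)

theorem critical_kernel_le (hbw : b < w) (hx : x ∈ Icc 0 b) :
    x * (1 - x) / (w - x) ^ 2 ≤ x / (w - b) ^ 2 := by
  have : 0 < w - b := sub_pos.2 hbw
  have hx0 : 0 ≤ x := hx.1
  gcongr
  · nlinarith
  · exact hx.2

theorem critical_kernel_lt_of_lt {v : ℝ} (hx0 : 0 < x) (hx1 : x < 1) (hxv : x < v) (hvw : v < w) :
    x * (1 - x) / (w - x) ^ 2 < x * (1 - x) / (v - x) ^ 2 := by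
  have : 0 < x * (1 - x) := mul_pos hx0 (sub_pos.2 hx1)
  have : 0 < v - x := sub_pos.2 hxv
  gcongr

theorem resolvent_kernel_lt_critical_kernel (hx0 : 0 < x) (hxw : x < w) (hw1 : w < 1) :
    x / (w - x) < x * (1 - x) / (w - x) ^ 2 := by
  have hwx : 0 < w - x := sub_pos.2 hxw
  calc x / (w - x) = x * (w - x) / (w - x) ^ 2 := by field_simp
    _ < x * (1 - x) / (w - x) ^ 2 := by gcongr

end Kernels

section Integrals

variable {ν : Measure ℝ} {b w : ℝ}

theorem integrable_resolvent_kernel (hν : ∀ᵐ x ∂ν, x ∈ Icc 0 b) (hid : Integrable (fun x ↦ x) ν)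
    (hbw : b < w) : Integrable (fun x ↦ x / (w - x)) ν := by
  refine (hid.div_const (w - b)).mono' (by fun_prop : Measurable _).aestronglyMeasurable ?_
  filter_upwards [hν] with x ⟨hx0, hxb⟩
  have : 0 < w - b := sub_pos.2 hbw
  have hwx : 0 < w - x := by linarith
  rw [Real.norm_of_nonneg (by positivity)]
  gcongr

theorem integrable_critical_kernel (hb1 : b < 1) (hν : ∀ᵐ x ∂ν, x ∈ Icc 0 b)
    (hid : Integrable (fun x ↦ x) ν) (hbw : b < w) :
    Integrable (fun x ↦ x * (1 - x) / (w - x) ^ 2) ν := by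
  refine (hid.div_const ((w - b) ^ 2)).mono' (by fun_prop : Measurable _).aestronglyMeasurable ?_
  filter_upwards [hν] with x hx
  rw [Real.norm_of_nonneg (critical_kernel_nonneg (Icc_subset_Icc_right hb1.le hx))]
  exact critical_kernel_le hbw hx

theorem resolventIntegral_nonneg (hν : ∀ᵐ x ∂ν, x ∈ Icc 0 b) (hbw : b < w) :
    0 ≤ resolventIntegral ν w :=
  integral_nonneg_of_ae <| hν.mono fun _ hx ↦ div_nonneg hx.1 (by linarith [hx.2])

theorem resolventIntegral_lt_criticalIntegral (hν : ∀ᵐ x ∂ν, x ∈ Icc 0 b)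
    (hpos : ∃ᶠ x in ae ν, 0 < x) (hid : Integrable (fun x ↦ x) ν) (hw : w ∈ Ioo b 1) :
    resolventIntegral ν w < criticalIntegral ν w := by
  refine integral_lt_integral_of_ae_lt_of_pos (integrable_resolvent_kernel hν hid hw.1)
    (integrable_critical_kernel (hw.1.trans hw.2) hν hid hw.1) (hν.mono fun _ hx ↦ hx.1) hpos
    (by simp) ?_
  filter_upwards [hν] with x hx hx0
  exact resolvent_kernel_lt_critical_kernel hx0 (hx.2.trans_lt hw.1) hw.2

theorem strictAntiOn_criticalIntegral (hb1 : b < 1) (hν : ∀ᵐ x ∂ν, x ∈ Icc 0 b)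
    (hpos : ∃ᶠ x in ae ν, 0 < x) (hid : Integrable (fun x ↦ x) ν) :
    StrictAntiOn (criticalIntegral ν) (Ioi b) := by
  intro v hv w hw hvw
  refine integral_lt_integral_of_ae_lt_of_pos (integrable_critical_kernel hb1 hν hid hw)
    (integrable_critical_kernel hb1 hν hid hv) (hν.mono fun _ hx ↦ hx.1) hpos (by simp) ?_
  filter_upwards [hν] with x hx hx0
  exact critical_kernel_lt_of_lt hx0 (hx.2.trans_lt hb1) (hx.2.trans_lt hv) hvw

theorem continuousOn_criticalIntegral (hb1 : b < 1) (hν : ∀ᵐ x ∂ν, x ∈ Icc 0 b)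
    (hid : Integrable (fun x ↦ x) ν) : ContinuousOn (criticalIntegral ν) (Ioi b) := by
  refine continuousOn_of_forall_continuousAt fun w hw ↦ ?_
  obtain ⟨v, hbv, hvw⟩ := exists_between (mem_Ioi.1 hw)
  have : 0 < v - b := sub_pos.2 hbv
  refine continuousAt_of_dominated
    (.of_forall fun _ ↦ (by fun_prop : Measurable _).aestronglyMeasurable) ?_
    (hid.div_const ((v - b) ^ 2)) ?_
  · filter_upwards [Ioi_mem_nhds hvw] with t ht
    filter_upwards [hν] with x hx
    have hx0 : 0 ≤ x := hx.1
    have hvt : v ≤ t := le_of_lt ht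
    rw [Real.norm_of_nonneg (critical_kernel_nonneg (Icc_subset_Icc_right hb1.le hx))]
    calc x * (1 - x) / (t - x) ^ 2 ≤ x / (t - b) ^ 2 := critical_kernel_le (hbv.trans ht) hx
      _ ≤ x / (v - b) ^ 2 := by gcongr
  · filter_upwards [hν] with x hx
    have hwx : w - x ≠ 0 := (sub_pos.2 (hx.2.trans_lt hw)).ne'
    fun_prop (disch := positivity)

theorem ofReal_criticalIntegral (hb1 : b < 1) (hν : ∀ᵐ x ∂ν, x ∈ Icc 0 b)
    (hid : Integrable (fun x ↦ x) ν) (hbw : b < w) :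
    ENNReal.ofReal (criticalIntegral ν w) =
      ∫⁻ x, ENNReal.ofReal (x * (1 - x) / (w - x) ^ 2) ∂ν :=
  ofReal_integral_eq_lintegral_ofReal (integrable_critical_kernel hb1 hν hid hbw) <|
    hν.mono fun _ hx ↦ critical_kernel_nonneg (Icc_subset_Icc_right hb1.le hx)

theorem lintegral_critical_kernel_le_liminf (ν : Measure ℝ) (b : ℝ) :
    ∫⁻ x, ENNReal.ofReal (x * (1 - x) / (b - x) ^ 2) ∂ν ≤
      liminf (fun w ↦ ∫⁻ x, ENNReal.ofReal (x * (1 - x) / (w - x) ^ 2) ∂ν) (𝓝[>] b) := by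
  refine (lintegral_mono fun x ↦ ?_).trans (lintegral_liminf_le fun w ↦ by fun_prop)
  -- At `x = b` the left-hand integrand vanishes, by the convention `y / 0 = 0`.
  rcases eq_or_ne x b with rfl | hxb
  · simp
  · have hbx : (b - x) ^ 2 ≠ 0 := pow_ne_zero 2 (sub_ne_zero.2 hxb.symm)
    have hcont : ContinuousAt (fun w ↦ x * (1 - x) / (w - x) ^ 2) b := by
      fun_prop (disch := assumption)
    exact (ENNReal.tendsto_ofReal (hcont.mono_left nhdsWithin_le_nhds)).liminf_eq.ge

theorem exists_mem_Ioo_one_lt_criticalIntegral (hb1 : b < 1) (hν : ∀ᵐ x ∂ν, x ∈ Icc 0 b)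
    (hid : Integrable (fun x ↦ x) ν)
    (hgt : 1 < ∫⁻ x, ENNReal.ofReal (x * (1 - x) / (b - x) ^ 2) ∂ν) :
    ∃ w ∈ Ioo b 1, 1 < criticalIntegral ν w := by
  have hnear := eventually_lt_of_lt_liminf (hgt.trans_le (lintegral_critical_kernel_le_liminf ν b))
  obtain ⟨w, hw, hw_mem⟩ := (hnear.and (Ioo_mem_nhdsGT hb1)).exists
  rw [← ofReal_criticalIntegral hb1 hν hid hw_mem.1, ENNReal.one_lt_ofReal] at hw
  exact ⟨w, hw_mem, hw⟩

theorem existsUnique_criticalIntegral_eq_one (hb1 : b < 1) (hν : ∀ᵐ x ∂ν, x ∈ Icc 0 b)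
    (hpos : ∃ᶠ x in ae ν, 0 < x) (hid : Integrable (fun x ↦ x) ν)
    (hlt : criticalIntegral ν 1 < 1)
    (hgt : 1 < ∫⁻ x, ENNReal.ofReal (x * (1 - x) / (b - x) ^ 2) ∂ν) :
    ∃! w, w ∈ Ioo b 1 ∧ criticalIntegral ν w = 1 := by
  obtain ⟨v, hv, hv_gt⟩ := exists_mem_Ioo_one_lt_criticalIntegral hb1 hν hid hgt
  have hcont : ContinuousOn (criticalIntegral ν) (Icc v 1) :=
    (continuousOn_criticalIntegral hb1 hν hid).mono fun _ ht ↦ hv.1.trans_le ht.1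
  obtain ⟨w, hw, hw_eq⟩ := intermediate_value_Ioo' hv.2.le hcont ⟨hlt, hv_gt⟩
  have hbw : b < w := hv.1.trans hw.1
  refine ⟨w, ⟨⟨hbw, hw.2⟩, hw_eq⟩, fun t ⟨ht, ht_eq⟩ ↦ ?_⟩
  exact (strictAntiOn_criticalIntegral hb1 hν hpos hid).injOn ht.1 hbw (ht_eq.trans hw_eq.symm)

theorem sub_mul_resolventIntegral_mem_Ioo (hb0 : 0 < b) (hν : ∀ᵐ x ∂ν, x ∈ Icc 0 b)
    (hpos : ∃ᶠ x in ae ν, 0 < x) (hid : Integrable (fun x ↦ x) ν) (hw : w ∈ Ioo b 1)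
    (hcrit : criticalIntegral ν w = 1) : w - (w - 1) * resolventIntegral ν w ∈ Ioo 0 1 := by
  have hnonneg : 0 ≤ resolventIntegral ν w := resolventIntegral_nonneg hν hw.1
  have hlt_one : resolventIntegral ν w < 1 :=
    hcrit ▸ resolventIntegral_lt_criticalIntegral hν hpos hid hw
  have hw0 : 0 < w := hb0.trans hw.1
  have hw1 : 0 < 1 - w := sub_pos.2 hw.2
  constructor <;> nlinarith

end Integrals

section ChangeOfVariable

variable {ν : Measure ℝ} {b u x : ℝ}

theorem inv_one_sub_sub (hu : u ≠ 1) : (1 - u)⁻¹ - x = (1 - x * (1 - u)) / (1 - u) := by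
  have hu' : 1 - u ≠ 0 := sub_ne_zero.2 hu.symm
  field_simp

theorem one_add_odds_mul (hx : x ≠ 1) :
    1 + x / (1 - x) * u = (1 - x * (1 - u)) / (1 - x) := by
  have hx' : 1 - x ≠ 0 := sub_ne_zero.2 hx.symm
  field_simp
  ring

theorem odds_div_sq_eq (hx : x ≠ 1) (hu : u ≠ 1) :
    x / (1 - x) / (1 + x / (1 - x) * u) ^ 2 =
      1 / (u - 1) ^ 2 * (x * (1 - x) / ((1 - u)⁻¹ - x) ^ 2) := by
  have hx' : 1 - x ≠ 0 := sub_ne_zero.2 hx.symm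
  have hu' : 1 - u ≠ 0 := sub_ne_zero.2 hu.symm
  rw [inv_one_sub_sub hu, one_add_odds_mul hx, ← neg_sub 1 u, neg_sq]
  field_simp

theorem odds_mul_div_eq (hx : x ≠ 1) (hu : u ≠ 1) :
    x / (1 - x) * u / (1 + x / (1 - x) * u) = ((1 - u)⁻¹ - 1) * (x / ((1 - u)⁻¹ - x)) := by
  have hx' : 1 - x ≠ 0 := sub_ne_zero.2 hx.symm
  have hu' : 1 - u ≠ 0 := sub_ne_zero.2 hu.symm
  have hinv : (1 - u)⁻¹ - 1 = u / (1 - u) := by rw [inv_one_sub_sub hu]; ring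
  rw [hinv, inv_one_sub_sub hu, one_add_odds_mul hx]
  field_simp

theorem integral_odds_div_sq_eq_iff (hν : ∀ᵐ x ∂ν, x ≠ 1) (hu : u ≠ 1) :
    ∫ x, x / (1 - x) / (1 + x / (1 - x) * u) ^ 2 ∂ν = 1 / (u - 1) ^ 2 ↔
      criticalIntegral ν (1 - u)⁻¹ = 1 := by
  rw [integral_congr_ae (hν.mono fun x hx ↦ odds_div_sq_eq hx hu), integral_const_mul]
  exact mul_eq_left₀ (one_div_ne_zero (pow_ne_zero 2 (sub_ne_zero.2 hu)))

theorem integral_odds_mul_div (hν : ∀ᵐ x ∂ν, x ≠ 1) (hu : u ≠ 1) :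
    ∫ x, x / (1 - x) * u / (1 + x / (1 - x) * u) ∂ν =
      ((1 - u)⁻¹ - 1) * resolventIntegral ν (1 - u)⁻¹ := by
  rw [integral_congr_ae (hν.mono fun x hx ↦ odds_mul_div_eq hx hu), integral_const_mul]
  rfl

theorem inv_one_sub_mem_Ioo_iff (hb0 : 0 < b) : (1 - u)⁻¹ ∈ Ioo b 1 ↔ u ∈ Ioo (1 - 1 / b) 0 := by
  rw [one_div, mem_Ioo, mem_Ioo]
  constructor
  · rintro ⟨hb, h1⟩
    have hu : 0 < 1 - u := inv_pos.1 (hb0.trans hb)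
    rw [lt_inv_comm₀ hb0 hu] at hb
    rw [inv_lt_one₀ hu] at h1
    constructor <;> linarith
  · rintro ⟨hξ, h0⟩
    have hu : 0 < 1 - u := by linarith
    rw [lt_inv_comm₀ hb0 hu, inv_lt_one₀ hu]
    constructor <;> linarith

end ChangeOfVariable

section Criticality

variable {ν : Measure ℝ} {b : ℝ}

theorem integrable_id_of_lintegral_odds_ne_top (hb1 : b < 1) (hν : ∀ᵐ x ∂ν, x ∈ Icc 0 b)
    (hodds : ∫⁻ x, ENNReal.ofReal (x / (1 - x)) ∂ν ≠ ⊤) : Integrable (fun x ↦ x) ν := by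
  have hodds_nonneg : ∀ᵐ x ∂ν, 0 ≤ x / (1 - x) :=
    hν.mono fun x hx ↦ div_nonneg hx.1 (by linarith [hx.2])
  have hint : Integrable (fun x ↦ x / (1 - x)) ν :=
    (lintegral_ofReal_ne_top_iff_integrable (by fun_prop : Measurable _).aestronglyMeasurable
      hodds_nonneg).1 hodds
  refine hint.mono' aestronglyMeasurable_id ?_
  filter_upwards [hν] with x ⟨hx0, hxb⟩
  rw [Real.norm_of_nonneg hx0]
  exact le_div_self hx0 (by linarith) (by linarith)

theorem criticalIntegral_one_lt_one (hb1 : b < 1) (hν : ∀ᵐ x ∂ν, x ∈ Icc 0 b)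
    (hodds : ∫⁻ x, ENNReal.ofReal (x / (1 - x)) ∂ν < 1) : criticalIntegral ν 1 < 1 := by
  have hid := integrable_id_of_lintegral_odds_ne_top hb1 hν hodds.ne_top
  rw [← ENNReal.ofReal_lt_one, ofReal_criticalIntegral hb1 hν hid hb1]
  convert hodds using 1
  refine lintegral_congr_ae (hν.mono fun x hx ↦ ?_)
  have : 1 - x ≠ 0 := by linarith [hx.2]
  field_simp

theorem frequently_pos_of_lintegral_critical_kernel_ne_zero (hν : ∀ᵐ x ∂ν, 0 ≤ x)
    (hcrit : ∫⁻ x, ENNReal.ofReal (x * (1 - x) / (b - x) ^ 2) ∂ν ≠ 0) :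
    ∃ᶠ x in ae ν, 0 < x := by
  intro hnonpos
  refine hcrit ((lintegral_eq_zero_iff (by fun_prop)).2 ?_)
  filter_upwards [hν, hnonpos] with x hx0 hx_nonpos
  simp [hx0.antisymm' (not_lt.1 hx_nonpos)]

end Criticality

theorem stmt_15_general {ν : Measure ℝ} {b : ℝ} (hb1 : b < 1) (hν : ∀ᵐ x ∂ν, x ∈ Icc 0 b)
    (hodds : ∫⁻ x, ENNReal.ofReal (x / (1 - x)) ∂ν < 1)
    (hcrit : 1 < ∫⁻ x, ENNReal.ofReal (x * (1 - x) / (b - x) ^ 2) ∂ν) :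
    (∃! u₀ : ℝ, u₀ ∈ Ioo (1 - 1 / b) 0 ∧
        ∫ x, x / (1 - x) / (1 + x / (1 - x) * u₀) ^ 2 ∂ν = 1 / (u₀ - 1) ^ 2) ∧
      ∀ u₀ ∈ Ioo (1 - 1 / b) 0,
        ∫ x, x / (1 - x) / (1 + x / (1 - x) * u₀) ^ 2 ∂ν = 1 / (u₀ - 1) ^ 2 →
          1 / (1 - u₀) - ∫ x, x / (1 - x) * u₀ / (1 + x / (1 - x) * u₀) ∂ν ∈ Ioo 0 1 := by
  have hid := integrable_id_of_lintegral_odds_ne_top hb1 hν hodds.ne_top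
  have hpos := frequently_pos_of_lintegral_critical_kernel_ne_zero (hν.mono fun _ hx ↦ hx.1)
    (zero_lt_one.trans hcrit).ne'
  have hne_one : ∀ᵐ x ∂ν, x ≠ 1 := hν.mono fun _ hx ↦ (hx.2.trans_lt hb1).ne
  have hb0 : 0 < b := by
    obtain ⟨x, hx0, hx⟩ := (hpos.and_eventually hν).exists
    exact hx0.trans_le hx.2
  have heq_iff : ∀ u ∈ Ioo (1 - 1 / b) 0,
      ∫ x, x / (1 - x) / (1 + x / (1 - x) * u) ^ 2 ∂ν = 1 / (u - 1) ^ 2 ↔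
        criticalIntegral ν (1 - u)⁻¹ = 1 :=
    fun u hu ↦ integral_odds_div_sq_eq_iff hne_one (hu.2.trans one_pos).ne
  refine ⟨?_, fun u hu hu_eq ↦ ?_⟩
  · rw [((Equiv.subLeft (1 : ℝ)).trans (Equiv.inv ℝ)).existsUnique_congr
      (q := fun w ↦ w ∈ Ioo b 1 ∧ criticalIntegral ν w = 1) fun u ↦
        (and_congr_right (heq_iff u)).trans (and_congr_left' (inv_one_sub_mem_Ioo_iff hb0).symm)]
    exact existsUnique_criticalIntegral_eq_one hb1 hν hpos hid
      (criticalIntegral_one_lt_one hb1 hν hodds) hcrit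
  · rw [integral_odds_mul_div hne_one (hu.2.trans one_pos).ne, one_div]
    exact sub_mul_resolventIntegral_mem_Ioo hb0 hν hpos hid ((inv_one_sub_mem_Ioo_iff hb0).2 hu)
      ((heq_iff u hu).1 hu_eq)

/-- Lemma 3.2: let `μ` be the law on `[0,1]` with distribution function
`F`, `b = b(F) < 1`, `ξ = 1 − 1/b`, and assume `α'_c < α < α_c` (expressed as
`α·⟨p/(1−p)⟩ < 1` and `α·⟨p(1−p)/(b−p)²⟩ > 1`, with lower Lebesgue integrals).  Then,
writing `r = p/(1−p)`, the equation `α·⟨r/(1+r·u₀)²⟩ = 1/(u₀−1)²` has a unique solution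
`u₀ ∈ (ξ, 0)`, and for this solution `c₀ = 1/(1−u₀) − α·⟨r·u₀/(1+r·u₀)⟩` satisfies
`0 < c₀ < 1`. -/
theorem stmt_15
    (μ : Measure ℝ) [IsProbabilityMeasure μ] (hsupp : μ (Set.Icc 0 1) = 1)
    (b : ℝ) (hb : b = sInf {s : ℝ | μ (Set.Iic s) = 1}) (hb1 : b < 1)
    (ξ : ℝ) (hξ : ξ = 1 - 1 / b)
    (α : ℝ) (hα : 0 < α)
    (hαc : ENNReal.ofReal α * ∫⁻ x, ENNReal.ofReal (x / (1 - x)) ∂μ < 1)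
    (hαc' : 1 < ENNReal.ofReal α * ∫⁻ x, ENNReal.ofReal (x * (1 - x) / (b - x) ^ 2) ∂μ) :
    (∃! u₀ : ℝ, u₀ ∈ Set.Ioo ξ 0 ∧
        α * ∫ x, (x / (1 - x)) / (1 + (x / (1 - x)) * u₀) ^ 2 ∂μ = 1 / (u₀ - 1) ^ 2) ∧
      ∀ u₀ ∈ Set.Ioo ξ 0,
        α * ∫ x, (x / (1 - x)) / (1 + (x / (1 - x)) * u₀) ^ 2 ∂μ = 1 / (u₀ - 1) ^ 2 →
          (1 / (1 - u₀) - α * ∫ x, (x / (1 - x)) * u₀ / (1 + (x / (1 - x)) * u₀) ∂μ) ∈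
            Set.Ioo (0:ℝ) 1 := by
  have hν : ∀ᵐ x ∂μ, x ∈ Icc 0 b := hb ▸ ae_mem_Icc_sInf_measure_Iic_eq_one hsupp
  simpa only [hξ, integral_smul_measure, ENNReal.toReal_ofReal hα.le, smul_eq_mul] using
    stmt_15_general hb1 (Measure.ae_smul_measure hν (ENNReal.ofReal α))
      (by rwa [lintegral_smul_measure]) (by rwa [lintegral_smul_measure])
end
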